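/- The function φ(z) = (2/√π) A(z/√2) belongs to the Fock space; that is, φ is entire and ∫_ℂ |A(z/√2)|² e^{-|z|²} dA(z) < ∞. -/

import Mathlib

open MeasureTheory Complex

/-- A(z) = ∫₀^z e^{u²} du, the antiderivative of e^{z²} vanishing at 0, the integral being
taken along the segment from 0 to z (equivalently, any path from 0 to z). -/
noncomputable def Afun (z : ℂ) : ℂ :=
  ∫ t in (0:ℝ)..1, z * Complex.exp (((t:ℂ) * z)^2)

theorem Afun_differentiable : Differentiable ℂ Afun := by
  have hd : Differentiable ℂ (fun z : ℂ => Complex.exp (z ^ 2)) := by fun_prop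
  obtain ⟨F, hF⟩ := hd.isExactOn_univ
  have key : Afun = fun z => F z - F 0 := by
    funext z
    have h : ∀ t ∈ Set.uIcc (0:ℝ) 1, HasDerivAt (fun t : ℝ => F ((t:ℂ) * z))
        (z * Complex.exp (((t:ℂ) * z) ^ 2)) t := by
      intro t _
      have h1 : HasDerivAt (fun s : ℂ => s * z) z (t:ℂ) := by
        simpa using (hasDerivAt_id (t:ℂ)).mul_const z
      have h2 := (HasDerivAt.comp (t:ℂ) (hF ((t:ℂ) * z) (Set.mem_univ _)) h1).comp_ofReal
      rw [mul_comm]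
      exact h2
    have hc : Continuous (fun t : ℝ => z * Complex.exp (((t:ℂ) * z) ^ 2)) := by fun_prop
    have := intervalIntegral.integral_eq_sub_of_hasDerivAt h (hc.intervalIntegrable _ _)
    unfold Afun
    rw [this]
    simp
  rw [key]
  intro z
  exact ((hF z (Set.mem_univ _)).differentiableAt).sub_const _

theorem norm_integrand (w : ℂ) (t : ℝ) :
    ‖w * Complex.exp (((t:ℂ) * w) ^ 2)‖ = ‖w‖ * Real.exp (t ^ 2 * (w.re ^ 2 - w.im ^ 2)) := by
  rw [norm_mul, Complex.norm_exp]
  congr 2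
  simp [pow_two]
  ring

theorem Afun_bound_neg (w : ℂ) (ha : w.re ^ 2 - w.im ^ 2 ≤ 0) : ‖Afun w‖ ≤ ‖w‖ := by
  have := intervalIntegral.norm_integral_le_of_norm_le_const (a := (0:ℝ)) (b := 1) (C := ‖w‖)
    (f := fun t : ℝ => w * Complex.exp (((t:ℂ) * w) ^ 2)) (by
      intro t _
      rw [norm_integrand]
      have : Real.exp (t ^ 2 * (w.re ^ 2 - w.im ^ 2)) ≤ 1 := by
        rw [Real.exp_le_one_iff]
        exact mul_nonpos_of_nonneg_of_nonpos (sq_nonneg t) ha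
      exact mul_le_of_le_one_right (norm_nonneg _) this)
  simpa [Afun] using this

theorem Afun_bound_pos (w : ℂ) (a : ℝ) (haw : a = w.re ^ 2 - w.im ^ 2) (ha : 0 ≤ a) :
    ‖Afun w‖ ≤ ‖w‖ / (1 + a) * (2 * Real.exp a) := by
  have hc : Continuous (fun t : ℝ => ‖w‖ / (1 + a) * (Real.exp a + a * Real.exp (t * a))) := by
    fun_prop
  have h1 := intervalIntegral.norm_integral_le_of_norm_le (a := (0:ℝ)) (b := 1) (μ := volume)
    (f := fun t : ℝ => w * Complex.exp (((t:ℂ) * w) ^ 2)) zero_le_one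
    (Filter.Eventually.of_forall (by
      intro t ht
      rw [norm_integrand, ← haw]
      obtain ⟨h0, h1⟩ := ht
      have e1 : Real.exp (t ^ 2 * a) ≤ Real.exp a := by
        apply Real.exp_le_exp.2; nlinarith [mul_nonneg ha (by nlinarith : 0 ≤ 1 - t ^ 2)]
      have e2 : Real.exp (t ^ 2 * a) ≤ Real.exp (t * a) := by
        apply Real.exp_le_exp.2; nlinarith [mul_nonneg ha (by nlinarith : 0 ≤ t - t ^ 2)]
      have e3 : (1 + a) * Real.exp (t ^ 2 * a) ≤ Real.exp a + a * Real.exp (t * a) := by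
        nlinarith [mul_le_mul_of_nonneg_left e2 ha]
      rw [div_mul_eq_mul_div, le_div_iff₀ (by linarith)]
      nlinarith [mul_le_mul_of_nonneg_left e3 (norm_nonneg w)])) (hc.intervalIntegrable _ _)
  have h2 : ∫ t in (0:ℝ)..1, ‖w‖ / (1 + a) * (Real.exp a + a * Real.exp (t * a))
      = ‖w‖ / (1 + a) * (2 * Real.exp a - 1) := by
    have h : ∀ t ∈ Set.uIcc (0:ℝ) 1,
        HasDerivAt (fun t : ℝ => ‖w‖ / (1 + a) * (t * Real.exp a + Real.exp (t * a)))
        (‖w‖ / (1 + a) * (Real.exp a + a * Real.exp (t * a))) t := by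
      intro t _
      have d1 : HasDerivAt (fun t : ℝ => t * Real.exp a) (1 * Real.exp a) t :=
        (hasDerivAt_id t).mul_const _
      have d2 : HasDerivAt (fun t : ℝ => Real.exp (t * a)) (Real.exp (t * a) * (1 * a)) t :=
        ((hasDerivAt_id t).mul_const a).exp
      have := (d1.add d2).const_mul (‖w‖ / (1 + a))
      exact this.congr_deriv (by ring)
    rw [intervalIntegral.integral_eq_sub_of_hasDerivAt h (hc.intervalIntegrable _ _)]
    simp
    ring
  rw [h2] at h1
  refine h1.trans ?_
  apply mul_le_mul_of_nonneg_left _ (by positivity)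
  linarith

theorem gauss_aux (s : ℝ) (hs : 0 ≤ s) : (1 + s) ^ 2 * Real.exp (-(2 * s)) ≤ 4 * Real.exp (-s) := by
  have h := Real.add_one_le_exp (s / 2)
  have h1 : (1 + s) ^ 2 ≤ 4 * Real.exp s := by
    have : Real.exp s = Real.exp (s / 2) ^ 2 := by rw [← Real.exp_nat_mul]; congr 1; push_cast; ring
    rw [this]
    nlinarith [Real.exp_pos (s / 2)]
  have h2 : Real.exp (-s) = Real.exp s * Real.exp (-(2 * s)) := by
    rw [← Real.exp_add]; congr 1; ring
  rw [h2, ← mul_assoc]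
  exact mul_le_mul_of_nonneg_right h1 (Real.exp_pos _).le

theorem main_bound (w : ℂ) :
    ‖Afun w‖ ^ 2 * Real.exp (-(2 * ‖w‖ ^ 2)) ≤
      32 * ((1 + w.re ^ 2)⁻¹ * Real.exp (-1 * w.im ^ 2)) := by
  have hr : ‖w‖ ^ 2 = w.re ^ 2 + w.im ^ 2 := by
    rw [Complex.sq_norm, Complex.normSq_apply]; ring
  have hx := sq_nonneg w.re
  have hy := sq_nonneg w.im
  have hg := gauss_aux _ hy
  suffices h : ‖Afun w‖ ^ 2 * Real.exp (-(2 * ‖w‖ ^ 2)) * (1 + w.re ^ 2) ≤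
      8 * ((1 + w.im ^ 2) ^ 2 * Real.exp (-(2 * w.im ^ 2))) by
    have h3 : 0 < 1 + w.re ^ 2 := by positivity
    have h4 : 32 * ((1 + w.re ^ 2)⁻¹ * Real.exp (-1 * w.im ^ 2)) =
        32 * Real.exp (-w.im ^ 2) / (1 + w.re ^ 2) := by
      rw [neg_one_mul, div_eq_mul_inv]; ring
    rw [h4, le_div_iff₀ h3]
    linarith
  rcases le_total (w.re ^ 2 - w.im ^ 2) 0 with ha | ha
  · have hA : ‖Afun w‖ ^ 2 ≤ w.re ^ 2 + w.im ^ 2 := by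
      rw [← hr]; exact pow_le_pow_left₀ (norm_nonneg _) (Afun_bound_neg w ha) 2
    have hE : Real.exp (-(2 * ‖w‖ ^ 2)) ≤ Real.exp (-(2 * w.im ^ 2)) := by
      apply Real.exp_le_exp.2; rw [hr]; linarith
    calc _ ≤ (w.re ^ 2 + w.im ^ 2) * Real.exp (-(2 * w.im ^ 2)) * (1 + w.re ^ 2) := by gcongr
      _ = ((w.re ^ 2 + w.im ^ 2) * (1 + w.re ^ 2)) * Real.exp (-(2 * w.im ^ 2)) := by ring
      _ ≤ (8 * (1 + w.im ^ 2) ^ 2) * Real.exp (-(2 * w.im ^ 2)) := by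
        refine mul_le_mul_of_nonneg_right ?_ (Real.exp_pos _).le
        calc _ ≤ (w.im ^ 2 + w.im ^ 2) * (1 + w.im ^ 2) := by
              have h5 : w.re ^ 2 ≤ w.im ^ 2 := by linarith
              gcongr ?_ * ?_ <;> linarith
          _ ≤ _ := by nlinarith
      _ = _ := by ring
  · obtain ⟨a, haw⟩ : ∃ a, a = w.re ^ 2 - w.im ^ 2 := ⟨_, rfl⟩
    rw [← haw] at ha
    have hA := pow_le_pow_left₀ (norm_nonneg _) (Afun_bound_pos w a haw ha) 2
    have hre : w.re ^ 2 = a + w.im ^ 2 := by linarith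
    rw [hre] at hr ⊢
    generalize w.im ^ 2 = s at *
    have hpoly : (a + s + s) * (1 + (a + s)) ≤ 2 * (1 + s) ^ 2 * (1 + a) ^ 2 := by
      have p1 : a + s + s ≤ 2 * ((1 + s) * (1 + a)) := by nlinarith [mul_nonneg ha hy]
      have p2 : 1 + (a + s) ≤ (1 + s) * (1 + a) := by nlinarith [mul_nonneg ha hy]
      calc _ ≤ (2 * ((1 + s) * (1 + a))) * ((1 + s) * (1 + a)) := by gcongr
        _ = _ := by ring
    have hE : Real.exp a ^ 2 * Real.exp (-(2 * ‖w‖ ^ 2)) ≤ Real.exp (-(2 * s)) := by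
      rw [← Real.exp_nat_mul, ← Real.exp_add]
      apply Real.exp_le_exp.2; rw [hr]; push_cast; linarith
    calc _ ≤ (‖w‖ / (1 + a) * (2 * Real.exp a)) ^ 2 * Real.exp (-(2 * ‖w‖ ^ 2)) * (1 + (a + s)) := by
          gcongr
      _ = 4 * (‖w‖ ^ 2 * (1 + (a + s)) / (1 + a) ^ 2)
            * (Real.exp a ^ 2 * Real.exp (-(2 * ‖w‖ ^ 2))) := by
          field_simp; ring
      _ ≤ 4 * (2 * (1 + s) ^ 2) * Real.exp (-(2 * s)) := by
          gcongr
          rw [div_le_iff₀ (by positivity), hr]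
          exact hpoly
      _ = _ := by ring

theorem Afun_integrable :
    Integrable (fun w : ℂ => ‖Afun w‖ ^ 2 * Real.exp (-(2 * ‖w‖ ^ 2))) := by
  have hb : Integrable (fun w : ℂ => 32 * ((1 + w.re ^ 2)⁻¹ * Real.exp (-1 * w.im ^ 2))) := by
    have h := (integrable_inv_one_add_sq.mul_prod (integrable_exp_neg_mul_sq one_pos)).const_mul 32
    exact (Complex.volume_preserving_equiv_real_prod.integrable_comp_emb
      Complex.measurableEquivRealProd.measurableEmbedding).2 h
  refine hb.mono' ?_ (Filter.Eventually.of_forall fun w => ?_)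
  · have := Afun_differentiable.continuous
    exact Continuous.aestronglyMeasurable (by fun_prop)
  · rw [Real.norm_of_nonneg (by positivity)]
    exact main_bound w

/-- The function φ(z) = (2/√π) A(z/√2) is entire and belongs to the Fock space:
∫_ℂ |A(z/√2)|² e^{-|z|²} dA(z) < ∞. -/
theorem A_in_fock :
    Differentiable ℂ (fun z : ℂ => 2 / (Real.sqrt Real.pi : ℂ) * Afun (z / (Real.sqrt 2 : ℂ))) ∧
    Integrable (fun z : ℂ => ‖Afun (z / (Real.sqrt 2 : ℂ))‖^2 * Real.exp (-‖z‖^2)) := by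
  refine ⟨?_, ?_⟩
  · have := Afun_differentiable
    fun_prop
  · have hs : (Real.sqrt 2)⁻¹ ≠ 0 := by positivity
    have h := Afun_integrable.comp_smul hs
    convert h using 2 with z
    have e : (Real.sqrt 2)⁻¹ • z = z / (Real.sqrt 2 : ℂ) := by
      rw [Complex.real_smul, div_eq_mul_inv, mul_comm]; push_cast; rfl
    have e2 : 2 * ‖z / (Real.sqrt 2 : ℂ)‖ ^ 2 = ‖z‖ ^ 2 := by
      rw [norm_div, div_pow, Complex.norm_real, Real.norm_of_nonneg (Real.sqrt_nonneg 2),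
        Real.sq_sqrt (by norm_num)]
      ring
    rw [e, e2]
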